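/- (Kozlov's theorem.) Suppose (K1): the system İ = ε h(I,θ;ε), θ̇ = ω(I) + ε g(I,θ;ε) has s first integrals F_j(I,θ;ε), j = 1,…,s, real-analytic in (I,θ,ε) near ε = 0; and (K2): if r ∈ ℤ^m and r·ω(I) = 0 for all I ∈ ℝ^ℓ, then r = 0. Then each F_j(I,θ;0) is independent of θ; write F₀(I) = (F₁(I,·;0),…,F_s(I,·;0)). Suppose further that the Jacobian matrix DF₀(I) has maximal rank at some point I₀ ∈ ℝ^ℓ, and that there is a Poincaré set 𝒫_s ⊆ U which is a key set for C^ω(U), where U is a neighborhood of I₀. Then the system has no first integral which is real-analytic in (I,θ,ε) near ε = 0 and functionally independent of F₁,…,F_s: there exist no ε₀ > 0 and real-analytic Φ : U × T^m × (−ε₀,ε₀) → ℝ such that Φ(·,·;ε) is a first integral of the system for every ε and such that for every sufficiently small ε the differentials of F₁(·,·;ε),…,F_s(·,·;ε),Φ(·,·;ε) are linearly independent at some point of U × T^m. -/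

import Mathlib

open MeasureTheory Set Real

noncomputable section

/-- Vectors in ℝ^n. -/
abbrev Vec (n : ℕ) := Fin n → ℝ

/-- Lie bracket of two vector fields on a real normed space:
[Y,Z](x) = DZ(x)Y(x) − DY(x)Z(x). -/
def lieBracket {E : Type*} [NormedAddCommGroup E] [NormedSpace ℝ E]
    (Y Z : E → E) (x : E) : E :=
  fderiv ℝ Z x (Y x) - fderiv ℝ Y x (Z x)

/-- Δ is a key set for C^ω(U): Δ ⊆ U and every real-analytic function on U
vanishing on Δ vanishes identically on U. -/
def IsKeySet {E : Type*} [NormedAddCommGroup E] [NormedSpace ℝ E] (U Δ : Set E) : Prop :=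
  Δ ⊆ U ∧ ∀ f : E → ℝ, AnalyticOnNhd ℝ f U → (∀ x ∈ Δ, f x = 0) → ∀ x ∈ U, f x = 0

/-- The Fourier coefficient ĥ_r(I) = (2π)^{−m} ∫_{T^m} h(I,θ;0) e^{−i r·θ} dθ ∈ ℂ^ℓ. -/
def aaFourierCoeff {ℓ m : ℕ} (h : Vec ℓ → Vec m → ℝ → Vec ℓ) (r : Fin m → ℤ) (I : Vec ℓ) :
    Fin ℓ → ℂ :=
  ((2 * π) ^ m)⁻¹ • ∫ θ in Set.univ.pi (fun _ : Fin m => Ioc (0:ℝ) (2 * π)),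
    (fun k => (h I θ 0 k : ℂ) *
      Complex.exp (-(Complex.I) * ((∑ i, (r i : ℝ) * θ i : ℝ) : ℂ))) ∂volume

/-- The vector field of the system İ = ε h(I,θ;ε), θ̇ = ω(I) + ε g(I,θ;ε). -/
def aaField {ℓ m : ℕ} (h : Vec ℓ → Vec m → ℝ → Vec ℓ) (ω : Vec ℓ → Vec m)
    (g : Vec ℓ → Vec m → ℝ → Vec m) (ε : ℝ) (p : Vec ℓ × Vec m) : Vec ℓ × Vec m :=
  (ε • h p.1 p.2 ε, ω p.1 + ε • g p.1 p.2 ε)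

open Topology Filter

/-- Integral of a directional derivative of a periodic function over the box vanishes. -/
lemma kz_integral_fderiv_periodic {m : ℕ} (w : Vec m → ℂ) (hw : ContDiff ℝ 1 w)
    (hper : ∀ θ (r : Fin m → ℤ), w (fun i => θ i + 2 * π * (r i : ℝ)) = w θ) (v : Vec m) :
    ∫ θ in Set.univ.pi (fun _ : Fin m => Ioc (0:ℝ) (2 * π)), fderiv ℝ w θ v = 0 := by
  have hdiff : Differentiable ℝ w := hw.differentiable (by norm_num)
  have hcont : Continuous (fderiv ℝ w) := hw.continuous_fderiv (by norm_num)
  rcases m with _ | n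
  · have : v = 0 := Subsingleton.elim _ _
    subst this
    simp only [map_zero, integral_zero]
  · have hae : (Set.univ.pi (fun _ : Fin (n+1) => Ioc (0:ℝ) (2 * π))) =ᵐ[volume]
        Icc (0 : Fin (n+1) → ℝ) (fun _ => 2 * π) :=
      Measure.univ_pi_Ioc_ae_eq_Icc (μ := fun _ : Fin (n+1) => (volume : Measure ℝ))
        (f := (0 : Fin (n+1) → ℝ)) (g := fun _ => 2 * π)
    rw [setIntegral_congr_set hae]
    have key : ∀ θ, fderiv ℝ w θ v =
        ∑ i, (v i • fderiv ℝ w θ) (Pi.single i 1) := by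
      intro θ
      conv_lhs => rw [pi_eq_sum_univ' v]
      rw [map_sum]
      refine Finset.sum_congr rfl fun i _ => ?_
      rw [map_smul, smul_apply]
    simp_rw [key]
    rw [integral_divergence_of_hasFDerivAt_off_countable' (0 : Fin (n+1) → ℝ) (fun _ => 2 * π)
      (fun i => by simp [Real.pi_pos.le]) (fun i θ => v i • w θ) (fun i θ => v i • fderiv ℝ w θ)
      ∅ countable_empty]
    · refine Finset.sum_eq_zero fun i _ => ?_
      rw [sub_eq_zero]
      congr 1
      ext x
      congr 1
      rw [← hper (i.insertNth ((0 : Fin (n+1) → ℝ) i) x) (Pi.single i 1)]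
      congr 1
      ext j
      refine Fin.succAboveCases i ?_ ?_ j
      · simp
      · intro k; simp
    · intro i
      exact (hdiff.continuous.const_smul (v i)).continuousOn
    · intro x _ i
      exact (hdiff x).hasFDerivAt.const_smul (v i)
    · apply Continuous.integrableOn_Icc
      fun_prop

/-- A continuous periodic function invariant along a nonresonant direction is constant. -/
lemma kz_const_of_invariant {m : ℕ} (w : Vec m → ℂ) (hw : Continuous w)
    (hper : ∀ θ (r : Fin m → ℤ), w (fun i => θ i + 2 * π * (r i : ℝ)) = w θ) (v : Vec m)
    (hv : ∀ r : Fin m → ℤ, r ≠ 0 → (∑ i, (r i : ℝ) * v i) ≠ 0)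
    (hinv : ∀ θ (t : ℝ), w (θ + t • v) = w θ) (θ θ' : Vec m) : w θ = w θ' := by
  let q : Vec m → UnitAddTorus (Fin m) := fun x i => ((x i : ℝ) : UnitAddCircle)
  have hq : IsOpenQuotientMap q :=
    IsOpenQuotientMap.piMap (fun i => QuotientAddGroup.isOpenQuotientMap_mk)
  let W0 : UnitAddTorus (Fin m) → ℂ := fun t => w (fun i => 2 * π * (Function.surjInv hq.surjective t) i)
  have hW0 : ∀ x : Vec m, W0 (q x) = w (fun i => 2 * π * x i) := by
    intro x
    have h1 : q (Function.surjInv hq.surjective (q x)) = q x := Function.surjInv_eq _ _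
    have h2 : ∀ i, ∃ n : ℤ, Function.surjInv hq.surjective (q x) i = x i + n := by
      intro i
      have := congrFun h1 i
      simp only [q] at this
      rw [← sub_eq_zero, ← AddCircle.coe_sub, AddCircle.coe_eq_zero_iff] at this
      obtain ⟨k, hk⟩ := this
      refine ⟨k, ?_⟩
      simp at hk
      linarith
    choose n hn using h2
    simp only [W0]
    rw [← hper (fun i => 2 * π * x i) n]
    congr 1
    ext i
    rw [hn]; ring
  have hW0c : Continuous W0 := by
    rw [← hq.continuous_comp_iff]
    have : W0 ∘ q = fun x => w (fun i => 2 * π * x i) := funext hW0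
    rw [this]
    fun_prop
  let W : C(UnitAddTorus (Fin m), ℂ) := ⟨W0, hW0c⟩
  have hWinv : ∀ (t : UnitAddTorus (Fin m)) (τ : ℝ), W (t + q (τ • v)) = W t := by
    intro t τ
    obtain ⟨x, rfl⟩ := hq.surjective t
    have : q x + q (τ • v) = q (x + τ • v) := by
      ext i; simp [q]
    rw [this]
    change W0 _ = W0 _
    rw [hW0, hW0]
    rw [← hinv (fun i => 2 * π * x i) (2 * π * τ)]
    congr 1
    ext i; simp; ring
  have hcoef : ∀ n : Fin m → ℤ, n ≠ 0 → UnitAddTorus.mFourierCoeff W n = 0 := by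
    intro n hn
    set S : ℝ := ∑ i, (n i : ℝ) * v i with hS
    have hS0 : S ≠ 0 := hv n hn
    obtain ⟨c, hc⟩ : ∃ c : ℝ, c * S = 1 / 2 := ⟨1 / (2 * S), by field_simp⟩
    let y : UnitAddTorus (Fin m) := q (c • v)
    have hy : UnitAddTorus.mFourier (-n) y = -1 := by
      simp only [UnitAddTorus.mFourier, ContinuousMap.coe_mk, y, q, fourier_coe_apply]
      rw [← Complex.exp_sum]
      have : (∑ i, 2 * (π:ℂ) * Complex.I * ((-n) i : ℤ) * (((c • v) i : ℝ) : ℂ) / ((1:ℝ):ℂ))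
          = - (π * Complex.I) := by
        have h3 : (∑ i, 2 * (π:ℂ) * Complex.I * ((-n) i : ℤ) * (((c • v) i : ℝ) : ℂ) / ((1:ℝ):ℂ))
          = - (2 * (π:ℂ) * Complex.I) * ((c * S : ℝ) : ℂ) := by
          rw [hS]
          push_cast
          rw [Finset.mul_sum, Finset.mul_sum]
          refine Finset.sum_congr rfl fun i _ => ?_
          simp
          ring
        rw [h3, hc]
        push_cast
        ring
      rw [this, Complex.exp_neg, Complex.exp_pi_mul_I]
      norm_num
    let μ : Measure (UnitAddTorus (Fin m)) :=
      Measure.pi (fun _ : Fin m => (AddCircle.haarAddCircle : Measure UnitAddCircle))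
    have e1 : UnitAddTorus.mFourierCoeff W n = ∫ t, UnitAddTorus.mFourier (-n) t • W t ∂μ := rfl
    have hadd : ∀ a b, UnitAddTorus.mFourier (-n) (a + b) =
        UnitAddTorus.mFourier (-n) a * UnitAddTorus.mFourier (-n) b := by
      intro a b
      simp only [UnitAddTorus.mFourier, ContinuousMap.coe_mk, fourier_apply, Pi.add_apply,
        ← Finset.prod_mul_distrib, smul_add, AddCircle.toCircle_add, Circle.coe_mul]
    have e2 : ∫ t, UnitAddTorus.mFourier (-n) t • W t ∂μ =
        ∫ t, UnitAddTorus.mFourier (-n) (t + y) • W (t + y) ∂μ :=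
      (integral_add_right_eq_self (μ := μ) (fun t => UnitAddTorus.mFourier (-n) t • W t) y).symm
    have e3 : ∫ t, UnitAddTorus.mFourier (-n) (t + y) • W (t + y) ∂μ =
        - ∫ t, UnitAddTorus.mFourier (-n) t • W t ∂μ := by
      rw [← integral_neg]
      congr 1
      ext t
      rw [hWinv, hadd, hy]
      simp
    rw [e3] at e2
    rw [e1]
    exact self_eq_neg.mp e2
  have hsupp : ∀ n ∉ ({0} : Finset (Fin m → ℤ)), UnitAddTorus.mFourierCoeff W n = 0 := by
    intro n hn
    exact hcoef n (by simpa using hn)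
  have hsum : Summable (UnitAddTorus.mFourierCoeff W) := summable_of_ne_finset_zero hsupp
  have hval : ∀ t, W t = UnitAddTorus.mFourierCoeff W 0 := by
    intro t
    have h1 := UnitAddTorus.hasSum_mFourier_series_apply_of_summable hsum t
    have h2 := hasSum_single (f := fun i => UnitAddTorus.mFourierCoeff W i • UnitAddTorus.mFourier i t)
      0 (fun n hn => by simp [hcoef n hn])
    have := h1.unique h2
    rw [this]
    simp [UnitAddTorus.mFourier_zero]
  have hfin : ∀ θ, w θ = UnitAddTorus.mFourierCoeff W 0 := by
    intro θ
    rw [← hval (q (fun i => θ i / (2 * π)))]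
    change _ = W0 _
    rw [hW0]
    congr 1
    ext i
    have := Real.pi_pos.ne'
    field_simp
  rw [hfin, hfin]

/-- The nonresonant set is dense. -/
lemma kz_dense_nonresonant {ℓ m : ℕ} (ω : Vec ℓ → Vec m) (hωan : AnalyticOnNhd ℝ ω univ)
    (hK2 : ∀ r : Fin m → ℤ, (∀ I : Vec ℓ, (∑ i, (r i : ℝ) * ω I i) = 0) → r = 0) :
    Dense {I : Vec ℓ | ∀ r : Fin m → ℤ, r ≠ 0 → (∑ i, (r i : ℝ) * ω I i) ≠ 0} := by
  have hωc : Continuous ω := continuousOn_univ.mp hωan.continuousOn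
  have : {I : Vec ℓ | ∀ r : Fin m → ℤ, r ≠ 0 → (∑ i, (r i : ℝ) * ω I i) ≠ 0} =
      ⋂ r : {r : Fin m → ℤ // r ≠ 0}, {I | (∑ i, (r.1 i : ℝ) * ω I i) ≠ 0} := by
    ext I; simp
  rw [this]
  apply dense_iInter_of_isOpen
  · rintro ⟨r, hr⟩
    refine isOpen_ne_fun ?_ continuous_const
    fun_prop
  · rintro ⟨r, hr⟩
    rw [← compl_compl {I | _}, ← interior_eq_empty_iff_dense_compl, Set.eq_empty_iff_forall_notMem]
    intro I hI
    apply hr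
    apply hK2
    have han : AnalyticOnNhd ℝ (fun I => ∑ i, (r i : ℝ) * ω I i) univ := by
      intro x hx
      have hx := hωan x hx
      have : ∀ i, AnalyticAt ℝ (fun I => ω I i) x := fun i => (analyticAt_pi_iff.mp hx) i
      exact Finset.analyticAt_fun_sum _ (fun i _ => analyticAt_const.mul (this i))
    have hev : (fun I => ∑ i, (r i : ℝ) * ω I i) =ᶠ[𝓝 I] 0 := by
      filter_upwards [mem_interior_iff_mem_nhds.mp hI] with J hJ
      simpa using hJ
    intro J
    exact han.eqOn_zero_of_preconnected_of_eventuallyEq_zero isPreconnected_univ (mem_univ I) hev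
      (mem_univ J)

lemma kz_theta_indep {ℓ m : ℕ} (U : Set (Vec ℓ)) (hU : IsOpen U) (ω : Vec ℓ → Vec m)
    (hωan : AnalyticOnNhd ℝ ω univ)
    (hK2 : ∀ r : Fin m → ℤ, (∀ I : Vec ℓ, (∑ i, (r i : ℝ) * ω I i) = 0) → r = 0)
    (G : Vec ℓ × Vec m → ℝ) (hG : AnalyticOnNhd ℝ G (U ×ˢ univ))
    (hper : ∀ (p : Vec ℓ × Vec m) (r : Fin m → ℤ),
      G (p.1, fun i => p.2 i + 2 * π * (r i : ℝ)) = G p)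
    (hint : ∀ p ∈ U ×ˢ (univ : Set (Vec m)), fderiv ℝ G p (0, ω p.1) = 0)
    (I : Vec ℓ) (hI : I ∈ U) (θ θ' : Vec m) : G (I, θ) = G (I, θ') := by
  have hD := kz_dense_nonresonant ω hωan hK2
  set D := {I : Vec ℓ | ∀ r : Fin m → ℤ, r ≠ 0 → (∑ i, (r i : ℝ) * ω I i) ≠ 0} with hDdef
  have hcase : ∀ J ∈ U ∩ D, G (J, θ) = G (J, θ') := by
    rintro J ⟨hJU, hJD⟩
    have hdiff : ∀ x : Vec m, DifferentiableAt ℝ G (J, x) := fun x =>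
      (hG (J, x) ⟨hJU, mem_univ _⟩).differentiableAt
    have hcont : Continuous (fun x : Vec m => G (J, x)) := by
      rw [continuous_iff_continuousAt]
      intro x
      exact ContinuousAt.comp (f := fun x : Vec m => (J, x)) (hdiff x).continuousAt (by fun_prop)
    have := kz_const_of_invariant (fun x => (G (J, x) : ℂ)) (Complex.continuous_ofReal.comp hcont)
      (fun x r => by simpa using hper (J, x) r) (ω J) hJD ?_ θ θ'
    · exact_mod_cast this
    · intro x t
      have hd : ∀ τ : ℝ, HasDerivAt (fun τ : ℝ => G (J, x + τ • ω J)) 0 τ := by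
        intro τ
        have h1 : HasDerivAt (fun τ : ℝ => (J, x + τ • ω J)) ((0 : Vec ℓ), ω J) τ := by
          refine (hasDerivAt_const τ J).prodMk ?_
          simpa using ((hasDerivAt_id τ).smul_const (ω J)).const_add x
        have h2 := (hdiff (x + τ • ω J)).hasFDerivAt.comp_hasDerivAt τ h1
        rw [hint _ ⟨hJU, mem_univ _⟩] at h2
        exact h2
      have := is_const_of_deriv_eq_zero (fun τ => (hd τ).differentiableAt)
        (fun τ => (hd τ).deriv) t 0
      simp only [zero_smul, add_zero] at this
      simp [this]
  have hmem : I ∈ closure (U ∩ D) := hD.open_subset_closure_inter hU hI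
  have hca : ContinuousAt (fun J => G (J, θ) - G (J, θ')) I := by
    refine ContinuousAt.sub ?_ ?_
    · exact ContinuousAt.comp (f := fun J : Vec ℓ => (J, θ))
        (hG (I, θ) ⟨hI, mem_univ _⟩).continuousAt (by fun_prop)
    · exact ContinuousAt.comp (f := fun J : Vec ℓ => (J, θ'))
        (hG (I, θ') ⟨hI, mem_univ _⟩).continuousAt (by fun_prop)
  have := hca.continuousWithinAt.mem_closure_image hmem (s := U ∩ D)
  have hsub : (fun J => G (J, θ) - G (J, θ')) '' (U ∩ D) ⊆ {0} := by
    rintro _ ⟨J, hJ, rfl⟩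
    simp [hcase J hJ]
  have h0 := closure_mono hsub this
  rw [closure_singleton] at h0
  exact sub_eq_zero.mp h0

/-- Linear algebra: too many covectors annihilating independent vectors. -/
lemma kz_gram {ℓ s : ℕ} (A : Matrix (Fin (s+1)) (Fin ℓ) ℝ) (H : Fin (ℓ - s) → Fin ℓ → ℂ)
    (hH : LinearIndependent ℂ H) (hA : ∀ i j, ∑ k, (A i k : ℂ) * H j k = 0) :
    (A * A.transpose).det = 0 := by
  by_contra hne
  let B : Matrix (Fin (s+1)) (Fin ℓ) ℂ := A.map Complex.ofRealHom
  have hBdet : (B * B.transpose).det ≠ 0 := by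
    have : B * B.transpose = (A * A.transpose).map Complex.ofRealHom := by
      rw [Matrix.map_mul, Matrix.transpose_map]
    rw [this, ← RingHom.mapMatrix_apply, ← RingHom.map_det]
    simpa using hne
  have hr1 : (B * B.transpose).rank = s + 1 := by
    rw [Matrix.rank_of_isUnit _ ((Matrix.isUnit_iff_isUnit_det _).2 (isUnit_iff_ne_zero.2 hBdet))]
    simp
  have hr2 : s + 1 ≤ B.rank := hr1.symm.le.trans (Matrix.rank_mul_le_left B B.transpose)
  have hker : ∀ j, H j ∈ LinearMap.ker B.mulVecLin := by
    intro j
    rw [LinearMap.mem_ker]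
    ext i
    simpa [B, Matrix.mulVec, dotProduct] using hA i j
  have hk : ℓ - s ≤ Module.finrank ℂ (LinearMap.ker B.mulVecLin) := by
    have : LinearIndependent ℂ (fun j => (⟨H j, hker j⟩ : LinearMap.ker B.mulVecLin)) :=
      LinearIndependent.of_comp (LinearMap.ker B.mulVecLin).subtype hH
    simpa using this.fintype_card_le_finrank
  have := LinearMap.finrank_range_add_finrank_ker B.mulVecLin
  rw [Module.finrank_fin_fun] at this
  change B.rank + _ = _ at this
  omega

lemma kz_gram_ne {ℓ s : ℕ} (A : Matrix (Fin (s+1)) (Fin ℓ) ℝ) (hA : LinearIndependent ℝ A) :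
    (A * A.transpose).det ≠ 0 := by
  have h1 : A.rank = s + 1 := by simpa using LinearIndependent.rank_matrix (M := A) hA
  have h2 : (A * A.transpose).rank = s + 1 := by rw [Matrix.rank_self_mul_transpose, h1]
  intro h0
  obtain ⟨v, hv, hv0⟩ := Matrix.exists_mulVec_eq_zero_iff.2 h0
  have h3 := LinearMap.finrank_range_add_finrank_ker (A * A.transpose).mulVecLin
  rw [Module.finrank_fin_fun] at h3
  change (A * A.transpose).rank + _ = _ at h3
  have h4 : Module.finrank ℝ (LinearMap.ker (A * A.transpose).mulVecLin) = 0 := by omega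
  rw [Submodule.finrank_eq_zero, LinearMap.ker_eq_bot'] at h4
  exact hv (h4 v hv0)

/-- First-order perturbation: at a resonance the Fourier coefficient of `h` is annihilated by
the differential of the unperturbed integral. -/
lemma kz_first_order {ℓ m : ℕ} (U : Set (Vec ℓ)) (hU : IsOpen U)
    (h : Vec ℓ → Vec m → ℝ → Vec ℓ) (ω : Vec ℓ → Vec m) (g : Vec ℓ → Vec m → ℝ → Vec m)
    (hhan : AnalyticOnNhd ℝ (fun p : (Vec ℓ × Vec m) × ℝ => h p.1.1 p.1.2 p.2) univ)
    (hgan : AnalyticOnNhd ℝ (fun p : (Vec ℓ × Vec m) × ℝ => g p.1.1 p.1.2 p.2) univ)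
    (ε₀ : ℝ) (hε₀ : 0 < ε₀) (Φ : Vec ℓ × Vec m → ℝ → ℝ)
    (han : AnalyticOnNhd ℝ (fun z : (Vec ℓ × Vec m) × ℝ => Φ z.1 z.2)
        ((U ×ˢ univ) ×ˢ Ioo (-ε₀) ε₀))
    (hper : ∀ ε (p : Vec ℓ × Vec m) (r : Fin m → ℤ),
        Φ (p.1, fun i => p.2 i + 2 * π * (r i : ℝ)) ε = Φ p ε)
    (hint : ∀ ε ∈ Ioo (-ε₀) ε₀, ∀ p ∈ U ×ˢ (univ : Set (Vec m)),
        fderiv ℝ (fun z => Φ z ε) p (aaField h ω g ε p) = 0)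
    (hind : ∀ I ∈ U, ∀ θ, Φ (I, θ) 0 = Φ (I, 0) 0)
    (I : Vec ℓ) (hI : I ∈ U) (r : Fin m → ℤ) (hr : (∑ i, (r i : ℝ) * ω I i) = 0) :
    ∑ k, ((fderiv ℝ (fun J => Φ (J, 0) 0) I (Pi.single k 1) : ℝ) : ℂ) *
      aaFourierCoeff h r I k = 0 := by
  set B : Set (Vec m) := Set.univ.pi (fun _ : Fin m => Ioc (0:ℝ) (2 * π)) with hB
  set K : Set (Vec m) := Icc (0 : Vec m) (fun _ => 2 * π) with hK
  have hBK : B ⊆ K := by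
    intro x hx
    exact ⟨fun i => (hx i (mem_univ _)).1.le, fun i => (hx i (mem_univ _)).2⟩
  have hae : B =ᵐ[volume] K :=
    Measure.univ_pi_Ioc_ae_eq_Icc (μ := fun _ : Fin m => (volume : Measure ℝ))
      (f := (0 : Fin m → ℝ)) (g := fun _ => 2 * π)
  have hKc : IsCompact K := isCompact_Icc
  let E : Vec m → ℂ := fun θ =>
    Complex.exp (-(Complex.I) * ((∑ i, (r i : ℝ) * θ i : ℝ) : ℂ))
  have hE : ContDiff ℝ 1 E := by
    have : ContDiff ℝ 1 (fun θ : Vec m => (∑ i, (r i : ℝ) * θ i : ℝ)) := by fun_prop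
    have h2 : ContDiff ℝ 1 (fun θ : Vec m => ((∑ i, (r i : ℝ) * θ i : ℝ) : ℂ)) :=
      Complex.ofRealCLM.contDiff.comp this
    exact (contDiff_const.mul h2).cexp
  have hEc : Continuous E := hE.continuous
  have hEper : ∀ θ (n : Fin m → ℤ), E (fun i => θ i + 2 * π * (n i : ℝ)) = E θ := by
    intro θ n
    have : -(Complex.I) * ((∑ i, (r i : ℝ) * (θ i + 2 * π * (n i : ℝ)) : ℝ) : ℂ) =
      -(Complex.I) * ((∑ i, (r i : ℝ) * θ i : ℝ) : ℂ) +
        ((-(∑ i, r i * n i) : ℤ) : ℂ) * (2 * π * Complex.I) := by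
      simp only [mul_add, Finset.sum_add_distrib]
      push_cast
      rw [mul_add, neg_mul _ (2 * (π : ℂ) * Complex.I), Finset.sum_mul, Finset.mul_sum _ _ (-Complex.I),
        Finset.mul_sum _ _ (-Complex.I), ← Finset.sum_neg_distrib]
      congr 1
      refine Finset.sum_congr rfl fun i _ => ?_
      ring
    simp only [E]
    rw [this, Complex.exp_add, Complex.exp_int_mul_two_pi_mul_I, mul_one]
  have hEω : ∀ θ, fderiv ℝ E θ (ω I) = 0 := by
    intro θ
    have hconst : ∀ t : ℝ, E (θ + t • ω I) = E θ := by
      intro t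
      simp only [E]
      congr 3
      have : ∑ i, (r i : ℝ) * (θ + t • ω I) i =
          ∑ i, (r i : ℝ) * θ i + t * ∑ i, (r i : ℝ) * ω I i := by
        rw [Finset.mul_sum, ← Finset.sum_add_distrib]
        refine Finset.sum_congr rfl fun i _ => ?_
        simp; ring
      rw [this, hr]; simp
    have h1 : HasDerivAt (fun t : ℝ => θ + t • ω I) (ω I) 0 := by
      simpa using ((hasDerivAt_id (0:ℝ)).smul_const (ω I)).const_add θ
    have h2 : HasFDerivAt E (fderiv ℝ E θ) (θ + (0:ℝ) • ω I) := by
      simpa using (hE.differentiable (by norm_num) θ).hasFDerivAt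
    have h3 := h2.comp_hasDerivAt (0:ℝ) h1
    have h4 : (E ∘ fun t : ℝ => θ + t • ω I) = fun _ => E θ := funext hconst
    rw [h4] at h3
    exact h3.unique (hasDerivAt_const _ _)
  -- joint function
  set Ψ : (Vec ℓ × Vec m) × ℝ → ℝ := fun z => Φ z.1 z.2 with hΨ
  have hΨd : ∀ θ, ∀ ε ∈ Ioo (-ε₀) ε₀, AnalyticAt ℝ Ψ ((I, θ), ε) :=
    fun θ ε hε => han _ ⟨⟨hI, mem_univ _⟩, hε⟩
  have hslice : ∀ θ, ∀ ε ∈ Ioo (-ε₀) ε₀, ∀ v, fderiv ℝ (fun z => Φ z ε) (I, θ) v =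
      fderiv ℝ Ψ ((I, θ), ε) (v, 0) := by
    intro θ ε hε v
    have h1 : HasFDerivAt (fun z : Vec ℓ × Vec m => (z, ε))
        (ContinuousLinearMap.inl ℝ (Vec ℓ × Vec m) ℝ) (I, θ) := hasFDerivAt_prodMk_left _ _
    have h2 := (hΨd θ ε hε).differentiableAt.hasFDerivAt.comp (I, θ) h1
    have h3 : (fun z => Φ z ε) = Ψ ∘ (fun z => (z, ε)) := rfl
    rw [h3, h2.fderiv]
    simp
  let q : ℝ → Vec m → ℝ := fun ε θ => fderiv ℝ Ψ ((I, θ), ε) ((h I θ ε, g I θ ε), 0)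
  have hhc : Continuous (fun p : (Vec ℓ × Vec m) × ℝ => h p.1.1 p.1.2 p.2) :=
    continuousOn_univ.mp hhan.continuousOn
  have hgc : Continuous (fun p : (Vec ℓ × Vec m) × ℝ => g p.1.1 p.1.2 p.2) :=
    continuousOn_univ.mp hgan.continuousOn
  have hemb : Continuous (fun x : ℝ × Vec m => ((I, x.2), x.1)) := by fun_prop
  have hqc : ContinuousOn (Function.uncurry q) (Ioo (-ε₀) ε₀ ×ˢ univ) := by
    rintro ⟨ε, θ⟩ ⟨hε, -⟩
    apply ContinuousAt.continuousWithinAt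
    have h1 : ContinuousAt (fun x : ℝ × Vec m => fderiv ℝ Ψ ((I, x.2), x.1)) (ε, θ) :=
      ContinuousAt.comp (f := fun x : ℝ × Vec m => ((I, x.2), x.1)) (g := fderiv ℝ Ψ)
        (hΨd θ ε hε).fderiv.continuousAt hemb.continuousAt
    have h2 : ContinuousAt (fun x : ℝ × Vec m => (((h I x.2 x.1, g I x.2 x.1), (0:ℝ)) :
        (Vec ℓ × Vec m) × ℝ)) (ε, θ) := by
      apply Continuous.continuousAt
      exact ((hhc.comp hemb).prodMk (hgc.comp hemb)).prodMk continuous_const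
    exact h1.clm_apply h2
  let Q : ℝ → Vec m → ℂ := fun ε θ => E θ * (q ε θ : ℂ)
  have hQc : ContinuousOn (Function.uncurry Q) (Ioo (-ε₀) ε₀ ×ˢ univ) := by
    have : ContinuousOn (fun x : ℝ × Vec m => E x.2) (Ioo (-ε₀) ε₀ ×ˢ univ) := by fun_prop
    exact this.mul (Complex.continuous_ofReal.comp_continuousOn hqc)
  have h0mem : (0:ℝ) ∈ Ioo (-ε₀) ε₀ := ⟨by linarith, hε₀⟩
  -- vanishing for nonzero parameter
  have hzero : ∀ ε ∈ Ioo (-ε₀) ε₀, ε ≠ 0 → ∫ θ in B, Q ε θ = 0 := by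
    intro ε hε hne
    have hw1 : ContDiff ℝ 1 (fun θ : Vec m => Φ (I, θ) ε) := by
      rw [contDiff_iff_contDiffAt]
      intro θ
      exact ContDiffAt.comp (f := fun θ : Vec m => ((I, θ), ε)) (g := Ψ) θ
        (hΨd θ ε hε).contDiffAt (by fun_prop)
    have hw2 : ContDiff ℝ 1 (fun θ : Vec m => (Φ (I, θ) ε : ℂ)) :=
      Complex.ofRealCLM.contDiff.comp hw1
    have hA := kz_integral_fderiv_periodic (fun θ => E θ * (Φ (I, θ) ε : ℂ)) (hE.mul hw2)
      (fun θ n => by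
        have := hper ε (I, θ) n
        simp only at this
        simp only [hEper, this]) (ω I)
    have hpt : ∀ θ, fderiv ℝ (fun θ => E θ * (Φ (I, θ) ε : ℂ)) θ (ω I) = -(ε : ℂ) * Q ε θ := by
      intro θ
      have hd1 := (hE.differentiable (by norm_num) θ).hasFDerivAt
      have hd2 := (hw1.differentiable (by norm_num) θ).hasFDerivAt
      have hd3 : HasFDerivAt (fun θ : Vec m => (Φ (I, θ) ε : ℂ))
          (Complex.ofRealCLM.comp (fderiv ℝ (fun θ : Vec m => Φ (I, θ) ε) θ)) θ :=
        Complex.ofRealCLM.hasFDerivAt.comp θ hd2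
      have hm : HasFDerivAt (fun θ => E θ * (Φ (I, θ) ε : ℂ)) _ θ := hd1.mul hd3
      rw [hm.fderiv]
      have hd4 : fderiv ℝ (fun θ : Vec m => Φ (I, θ) ε) θ (ω I) =
          fderiv ℝ Ψ ((I, θ), ε) ((0, ω I), 0) := by
        have h1 : HasFDerivAt (fun x : Vec m => ((I, x), ε))
            ((ContinuousLinearMap.inl ℝ (Vec ℓ × Vec m) ℝ).comp
              (ContinuousLinearMap.inr ℝ (Vec ℓ) (Vec m))) θ :=
          HasFDerivAt.comp (f := fun x : Vec m => (I, x)) (g := fun z : Vec ℓ × Vec m => (z, ε)) θ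
            (hasFDerivAt_prodMk_left (I, θ) ε) (hasFDerivAt_prodMk_right I θ)
        have h2 := (hΨd θ ε hε).differentiableAt.hasFDerivAt.comp θ h1
        have h3 : (fun θ : Vec m => Φ (I, θ) ε) = Ψ ∘ (fun x : Vec m => ((I, x), ε)) := rfl
        rw [h3, h2.fderiv]
        simp
      have hi := hint ε hε (I, θ) ⟨hI, mem_univ _⟩
      rw [hslice θ ε hε] at hi
      have hsplit : ((aaField h ω g ε (I, θ), (0:ℝ)) : (Vec ℓ × Vec m) × ℝ) =
          ((0, ω I), 0) + ε • ((h I θ ε, g I θ ε), 0) := by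
        simp [aaField]
      rw [hsplit, map_add, map_smul] at hi
      have hi2 : fderiv ℝ Ψ ((I, θ), ε) ((0, ω I), 0) = - (ε * q ε θ) := by
        simp only [smul_eq_mul] at hi
        simp only [q]
        linarith
      simp only [add_apply, smul_apply, hEω, smul_zero, add_zero,
        ContinuousLinearMap.comp_apply, hd4, hi2, Complex.ofRealCLM_apply, Q]
      push_cast
      simp only [smul_eq_mul]
      ring
    simp_rw [hpt] at hA
    rw [integral_const_mul] at hA
    have : -(ε:ℂ) ≠ 0 := by simpa using hne
    exact (mul_eq_zero.mp hA).resolve_left this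
  -- continuity at zero
  have hcontI : ContinuousAt (fun ε => ∫ θ in B, Q ε θ) 0 := by
    have hc : IsCompact (Icc (-(ε₀/2)) (ε₀/2) ×ˢ K) := isCompact_Icc.prod hKc
    have hsub : Icc (-(ε₀/2)) (ε₀/2) ⊆ Ioo (-ε₀) ε₀ :=
      fun x hx => ⟨by linarith [hx.1], by linarith [hx.2]⟩
    obtain ⟨M, hM⟩ := hc.exists_bound_of_continuousOn
      (hQc.mono (prod_mono hsub (subset_univ _)))
    have hnhds : Icc (-(ε₀/2)) (ε₀/2) ∈ 𝓝 (0:ℝ) := Icc_mem_nhds (by linarith) (by linarith)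
    have hmB : MeasurableSet B := MeasurableSet.univ_pi (fun _ => measurableSet_Ioc)
    refine continuousAt_of_dominated (bound := fun _ => M) ?_ ?_ ?_ ?_
    · filter_upwards [hnhds] with ε hε
      have : Continuous (Q ε) := by
        rw [continuous_iff_continuousAt]
        intro θ
        have h1 : ContinuousAt (Function.uncurry Q) (ε, θ) :=
          hQc.continuousAt (prod_mem_nhds (Ioo_mem_nhds (hsub hε).1 (hsub hε).2) univ_mem)
        exact ContinuousAt.comp (f := fun θ : Vec m => (ε, θ)) h1 (by fun_prop)
      exact this.aestronglyMeasurable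
    · filter_upwards [hnhds] with ε hε
      filter_upwards [ae_restrict_mem hmB] with θ hθ
      exact hM (ε, θ) ⟨hε, hBK hθ⟩
    · have : IsFiniteMeasure (volume.restrict B) :=
        ⟨by
          rw [Measure.restrict_apply_univ]
          exact (measure_mono hBK).trans_lt hKc.measure_lt_top⟩
      exact integrable_const M
    · refine ae_of_all _ fun θ => ?_
      have h1 : ContinuousAt (Function.uncurry Q) (0, θ) :=
        hQc.continuousAt (prod_mem_nhds (Ioo_mem_nhds h0mem.1 h0mem.2) univ_mem)
      exact ContinuousAt.comp (f := fun ε : ℝ => (ε, θ)) h1 (by fun_prop)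
  have hlim : ∫ θ in B, Q 0 θ = 0 := by
    have h1 : Tendsto (fun ε => ∫ θ in B, Q ε θ) (𝓝[≠] 0) (𝓝 (∫ θ in B, Q 0 θ)) :=
      hcontI.tendsto.mono_left nhdsWithin_le_nhds
    have h2 : Tendsto (fun ε => ∫ θ in B, Q ε θ) (𝓝[≠] (0:ℝ)) (𝓝 0) := by
      refine tendsto_const_nhds.congr' ?_
      filter_upwards [self_mem_nhdsWithin,
        mem_nhdsWithin_of_mem_nhds (Ioo_mem_nhds h0mem.1 h0mem.2)] with ε h3 h4
      exact (hzero ε h4 h3).symm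
    exact tendsto_nhds_unique h1 h2
  -- identify Q at zero
  set a : Fin ℓ → ℝ := fun k => fderiv ℝ (fun J => Φ (J, 0) 0) I (Pi.single k 1) with ha
  have hQ0 : ∀ θ, Q 0 θ = ∑ k, (a k : ℂ) * ((h I θ 0 k : ℂ) * E θ) := by
    intro θ
    have hev : (fun z : Vec ℓ × Vec m => Φ z 0) =ᶠ[𝓝 (I, θ)]
        (fun J => Φ (J, 0) 0) ∘ Prod.fst := by
      have : U ×ˢ (univ : Set (Vec m)) ∈ 𝓝 (I, θ) :=
        prod_mem_nhds (hU.mem_nhds hI) univ_mem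
      filter_upwards [this] with z hz
      exact hind z.1 hz.1 z.2
    have hφ : DifferentiableAt ℝ (fun J => Φ (J, 0) 0) I := by
      exact DifferentiableAt.comp (f := fun J : Vec ℓ => ((J, (0 : Vec m)), (0:ℝ))) (g := Ψ) I
        (hΨd 0 0 h0mem).differentiableAt (by fun_prop)
    have hφ' : HasFDerivAt (fun J => Φ (J, 0) 0) (fderiv ℝ (fun J => Φ (J, 0) 0) I)
      (Prod.fst (I, θ)) := hφ.hasFDerivAt
    have h1 := hφ'.comp (I, θ) (hasFDerivAt_fst (𝕜 := ℝ) (E := Vec ℓ) (F := Vec m))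
    have h2 : q 0 θ = fderiv ℝ (fun J => Φ (J, 0) 0) I (h I θ 0) := by
      simp only [q]
      rw [← hslice θ 0 h0mem, hev.fderiv_eq, h1.fderiv]
      simp
    have h3 : q 0 θ = ∑ k, a k * h I θ 0 k := by
      rw [h2]
      conv_lhs => rw [pi_eq_sum_univ' (h I θ 0)]
      rw [map_sum]
      refine Finset.sum_congr rfl fun k _ => ?_
      rw [map_smul, smul_eq_mul, mul_comm]
    simp only [Q]
    rw [h3]
    push_cast
    rw [Finset.mul_sum]
    refine Finset.sum_congr rfl fun k _ => ?_
    ring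
  have hintg : Integrable (fun θ => (fun k => (h I θ 0 k : ℂ) * E θ : Fin ℓ → ℂ))
      (volume.restrict B) := by
    have hc : Continuous (fun θ => (fun k => (h I θ 0 k : ℂ) * E θ : Fin ℓ → ℂ)) := by
      refine continuous_pi fun k => ?_
      have h1 : Continuous (fun θ : Vec m => h I θ 0) :=
        hhc.comp (f := fun θ : Vec m => ((I, θ), (0:ℝ))) (by fun_prop)
      have h2 : Continuous (fun θ : Vec m => h I θ 0 k) := (continuous_apply k).comp h1
      exact (Complex.continuous_ofReal.comp h2).mul hEc
    exact (hc.continuousOn.integrableOn_compact hKc).mono_set hBK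
  let L : (Fin ℓ → ℂ) →L[ℝ] ℂ :=
    ∑ k, (a k) • (ContinuousLinearMap.proj (R := ℝ) (φ := fun _ : Fin ℓ => ℂ) k)
  have hL : ∀ v, L v = ∑ k, (a k : ℂ) * v k := by
    intro v; simp [L]
  have hfin := L.integral_comp_comm hintg
  simp only [hL] at hfin
  simp_rw [hQ0] at hlim
  rw [hlim] at hfin
  have : ∑ k, ((a k : ℝ) : ℂ) * aaFourierCoeff h r I k =
      (((2 * π) ^ m)⁻¹ : ℝ) • ∑ k, (a k : ℂ) *
        (∫ θ in B, (fun k => (h I θ 0 k : ℂ) * E θ : Fin ℓ → ℂ)) k := by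
    rw [Finset.smul_sum]
    refine Finset.sum_congr rfl fun k _ => ?_
    rw [aaFourierCoeff, Pi.smul_apply, mul_smul_comm]
  rw [this, ← hfin, smul_zero]

/-- Kozlov's theorem (Theorem 1.1). -/
theorem kozlov
    (ℓ m : ℕ)
    (U : Set (Vec ℓ)) (hUopen : IsOpen U)
    -- the system İ = ε h(I,θ;ε), θ̇ = ω(I) + ε g(I,θ;ε), real-analytic and 2π-periodic in θ
    (h : Vec ℓ → Vec m → ℝ → Vec ℓ) (ω : Vec ℓ → Vec m) (g : Vec ℓ → Vec m → ℝ → Vec m)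
    (hhan : AnalyticOnNhd ℝ (fun p : (Vec ℓ × Vec m) × ℝ => h p.1.1 p.1.2 p.2) univ)
    (hωan : AnalyticOnNhd ℝ ω univ)
    (hgan : AnalyticOnNhd ℝ (fun p : (Vec ℓ × Vec m) × ℝ => g p.1.1 p.1.2 p.2) univ)
    (hhper : ∀ I θ ε (r : Fin m → ℤ), h I (fun i => θ i + 2 * π * (r i : ℝ)) ε = h I θ ε)
    (hgper : ∀ I θ ε (r : Fin m → ℤ), g I (fun i => θ i + 2 * π * (r i : ℝ)) ε = g I θ ε)
    -- (K1): s first integrals F_j(I,θ;ε), real-analytic in (I,θ,ε) near ε = 0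
    (s : ℕ) (ε₁ : ℝ) (hε₁ : 0 < ε₁)
    (F : Fin s → (Vec ℓ × Vec m) → ℝ → ℝ)
    (hFan : ∀ j, AnalyticOnNhd ℝ (fun z : (Vec ℓ × Vec m) × ℝ => F j z.1 z.2)
      (univ ×ˢ Ioo (-ε₁) ε₁))
    (hFper : ∀ j ε (p : Vec ℓ × Vec m) (r : Fin m → ℤ),
      F j (p.1, fun i => p.2 i + 2 * π * (r i : ℝ)) ε = F j p ε)
    (hFint : ∀ j, ∀ ε ∈ Ioo (-ε₁) ε₁, ∀ p : Vec ℓ × Vec m,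
      fderiv ℝ (fun z => F j z ε) p (aaField h ω g ε p) = 0)
    -- (K2): if r·ω(I) = 0 for all I ∈ ℝ^ℓ then r = 0
    (hK2 : ∀ r : Fin m → ℤ, (∀ I : Vec ℓ, (∑ i, (r i : ℝ) * ω I i) = 0) → r = 0)
    -- DF₀ has maximal rank at I₀ ∈ U, where F₀(I) = (F₁(I,·;0),…,F_s(I,·;0))
    (I₀ : Vec ℓ) (hI₀U : I₀ ∈ U)
    (hrank : Module.finrank ℝ
      (LinearMap.range ((fderiv ℝ (fun I : Vec ℓ => fun j : Fin s => F j (I, 0) 0) I₀) :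
        Vec ℓ →ₗ[ℝ] Vec s)) = min ℓ s)
    -- a Poincaré set 𝒫_s ⊆ U which is a key set for C^ω(U)
    (P : Set (Vec ℓ)) (hPkey : IsKeySet U P)
    (hPoin : ∀ I ∈ P, ∃ r : Fin (ℓ - s) → (Fin m → ℤ),
      LinearIndependent ℤ r ∧
      (∀ j, (∑ i, (r j i : ℝ) * ω I i) = 0) ∧
      LinearIndependent ℂ fun j => aaFourierCoeff h (r j) I) :
    -- conclusion: each F_j(I,θ;0) is independent of θ, and the system has no first integral
    -- real-analytic in (I,θ,ε) near ε = 0 functionally independent of F₁,…,F_s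
    (∀ j (I : Vec ℓ) (θ θ' : Vec m), F j (I, θ) 0 = F j (I, θ') 0) ∧
    ¬ ∃ (ε₀ : ℝ) (_ : 0 < ε₀ ∧ ε₀ ≤ ε₁) (Φ : (Vec ℓ × Vec m) → ℝ → ℝ),
      AnalyticOnNhd ℝ (fun z : (Vec ℓ × Vec m) × ℝ => Φ z.1 z.2)
        ((U ×ˢ univ) ×ˢ Ioo (-ε₀) ε₀) ∧
      (∀ ε (p : Vec ℓ × Vec m) (r : Fin m → ℤ),
        Φ (p.1, fun i => p.2 i + 2 * π * (r i : ℝ)) ε = Φ p ε) ∧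
      (∀ ε ∈ Ioo (-ε₀) ε₀, ∀ p ∈ U ×ˢ (univ : Set (Vec m)),
        fderiv ℝ (fun z => Φ z ε) p (aaField h ω g ε p) = 0) ∧
      (∀ ε ∈ Ioo (-ε₀) ε₀, ∃ p ∈ U ×ˢ (univ : Set (Vec m)),
        LinearIndependent ℝ
          (Fin.cons (fderiv ℝ (fun z => Φ z ε) p)
            (fun j : Fin s => fderiv ℝ (fun z => F j z ε) p) :
            Fin (s + 1) → (Vec ℓ × Vec m) →L[ℝ] ℝ)) := by
  have hFan' : ∀ j, AnalyticOnNhd ℝ (fun z : (Vec ℓ × Vec m) × ℝ => F j z.1 z.2)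
      ((univ ×ˢ univ) ×ˢ Ioo (-ε₁) ε₁) := by
    intro j
    rw [univ_prod_univ]
    exact hFan j
  have hsl : ∀ (V : Set (Vec ℓ)) (ε₂ : ℝ), 0 < ε₂ → ∀ G : (Vec ℓ × Vec m) → ℝ → ℝ,
      AnalyticOnNhd ℝ (fun z : (Vec ℓ × Vec m) × ℝ => G z.1 z.2)
        ((V ×ˢ univ) ×ˢ Ioo (-ε₂) ε₂) → AnalyticOnNhd ℝ (fun z => G z 0) (V ×ˢ univ) := by
    intro V ε₂ h2 G hG z hz
    exact AnalyticAt.comp (f := fun z : Vec ℓ × Vec m => (z, (0:ℝ)))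
      (hG (z, 0) ⟨hz, by linarith, h2⟩) (analyticAt_id.prod analyticAt_const)
  have hFind : ∀ j (I : Vec ℓ) (θ θ' : Vec m), F j (I, θ) 0 = F j (I, θ') 0 := by
    intro j I θ θ'
    refine kz_theta_indep univ isOpen_univ ω hωan hK2 (fun z => F j z 0)
      (hsl univ ε₁ hε₁ (F j) (hFan' j)) (hFper j 0) ?_ I (mem_univ _) θ θ'
    intro p _
    simpa [aaField] using hFint j 0 ⟨by linarith, hε₁⟩ p
  refine ⟨hFind, ?_⟩
  rintro ⟨ε₀, ⟨hε₀, hle⟩, Φ, hΦan, hΦper, hΦint, hΦli⟩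
  have h0 : (0:ℝ) ∈ Ioo (-ε₀) ε₀ := ⟨by linarith, hε₀⟩
  -- all the integrals together
  let G : Fin (s + 1) → (Vec ℓ × Vec m) → ℝ → ℝ := Fin.cons Φ F
  have hIoo : Ioo (-ε₀) ε₀ ⊆ Ioo (-ε₁) ε₁ := Ioo_subset_Ioo (by linarith) hle
  have hGan : ∀ j, AnalyticOnNhd ℝ (fun z : (Vec ℓ × Vec m) × ℝ => G j z.1 z.2)
      ((U ×ˢ univ) ×ˢ Ioo (-ε₀) ε₀) := by
    intro j
    refine Fin.cases ?_ (fun j => ?_) j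
    · exact hΦan
    · exact (hFan j).mono (prod_mono (subset_univ _) hIoo)
  have hGper : ∀ j ε (p : Vec ℓ × Vec m) (r : Fin m → ℤ),
      G j (p.1, fun i => p.2 i + 2 * π * (r i : ℝ)) ε = G j p ε := by
    intro j
    refine Fin.cases ?_ (fun j => ?_) j
    · exact hΦper
    · exact hFper j
  have hGint : ∀ j, ∀ ε ∈ Ioo (-ε₀) ε₀, ∀ p ∈ U ×ˢ (univ : Set (Vec m)),
      fderiv ℝ (fun z => G j z ε) p (aaField h ω g ε p) = 0 := by
    intro j
    refine Fin.cases ?_ (fun j => ?_) j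
    · exact hΦint
    · exact fun ε hε p _ => hFint j ε (hIoo hε) p
  have hGind : ∀ j, ∀ I ∈ U, ∀ θ, G j (I, θ) 0 = G j (I, 0) 0 := by
    intro j I hI θ
    refine kz_theta_indep U hUopen ω hωan hK2 (fun z => G j z 0)
      (hsl U ε₀ hε₀ (G j) (hGan j)) (hGper j 0) ?_ I hI θ 0
    intro p hp
    simpa [aaField] using hGint j 0 h0 p hp
  -- matrix of gradients
  let A : Vec ℓ → Matrix (Fin (s + 1)) (Fin ℓ) ℝ := fun I => Matrix.of fun j k =>
    fderiv ℝ (fun J => G j (J, 0) 0) I (Pi.single k 1)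
  have hφan : ∀ j, AnalyticOnNhd ℝ (fun J => G j (J, 0) 0) U := by
    intro j I hI
    exact AnalyticAt.comp (f := fun J : Vec ℓ => (J, (0 : Vec m))) (g := fun z => G j z 0)
      (hsl U ε₀ hε₀ (G j) (hGan j) (I, 0) ⟨hI, mem_univ _⟩)
      (analyticAt_id.prod analyticAt_const)
  have hAan : ∀ j k, AnalyticOnNhd ℝ (fun I => A I j k) U := by
    intro j k I hI
    have h1 := ((hφan j) I hI).fderiv
    exact (ContinuousLinearMap.apply ℝ ℝ (Pi.single k 1 : Vec ℓ)).analyticAt _ |>.comp h1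
  have hdetan : AnalyticOnNhd ℝ (fun I => (A I * (A I).transpose).det) U := by
    intro I hI
    simp only [Matrix.det_apply']
    refine Finset.analyticAt_fun_sum _ fun σ _ => analyticAt_const.mul ?_
    refine Finset.analyticAt_fun_prod _ fun i _ => ?_
    simp only [Matrix.mul_apply, Matrix.transpose_apply]
    exact Finset.analyticAt_fun_sum _ fun k _ => (hAan _ _ I hI).mul (hAan _ _ I hI)
  have hdet0 : ∀ I ∈ P, (A I * (A I).transpose).det = 0 := by
    intro I hIP
    obtain ⟨r, -, hr, hli⟩ := hPoin I hIP
    refine kz_gram (A I) _ hli fun j i => ?_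
    exact kz_first_order U hUopen h ω g hhan hgan ε₀ hε₀ (G j) (hGan j) (hGper j) (hGint j)
      (hGind j) I (hPkey.1 hIP) (r i) (hr i)
  obtain ⟨⟨I, θ⟩, ⟨hIU, -⟩, hli⟩ := hΦli 0 h0
  refine kz_gram_ne (A I) ?_ (hPkey.2 _ hdetan hdet0 I hIU)
  have hGd : ∀ j, fderiv ℝ (fun z => G j z 0) (I, θ) =
      (fderiv ℝ (fun J => G j (J, 0) 0) I).comp (ContinuousLinearMap.fst ℝ (Vec ℓ) (Vec m)) := by
    intro j
    have hev : (fun z : Vec ℓ × Vec m => G j z 0) =ᶠ[𝓝 (I, θ)]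
        (fun J => G j (J, 0) 0) ∘ Prod.fst := by
      have : U ×ˢ (univ : Set (Vec m)) ∈ 𝓝 (I, θ) :=
        prod_mem_nhds (hUopen.mem_nhds hIU) univ_mem
      filter_upwards [this] with z hz
      exact hGind j z.1 hz.1 z.2
    have hφ' : HasFDerivAt (fun J => G j (J, 0) 0) (fderiv ℝ (fun J => G j (J, 0) 0) I)
      (Prod.fst (I, θ)) := (hφan j I hIU).differentiableAt.hasFDerivAt
    have h1 := hφ'.comp (I, θ) (hasFDerivAt_fst (𝕜 := ℝ) (E := Vec ℓ) (F := Vec m))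
    rw [hev.fderiv_eq, h1.fderiv]
  let T : (Fin ℓ → ℝ) →ₗ[ℝ] ((Vec ℓ × Vec m) →L[ℝ] ℝ) :=
    { toFun := fun a => ∑ k, a k • ((ContinuousLinearMap.proj (R := ℝ)
        (φ := fun _ : Fin ℓ => ℝ) k).comp (ContinuousLinearMap.fst ℝ (Vec ℓ) (Vec m)))
      map_add' := fun a b => by simp [add_smul, Finset.sum_add_distrib]
      map_smul' := fun c a => by simp [mul_smul, Finset.smul_sum] }
  refine LinearIndependent.of_comp T ?_
  convert hli using 1
  ext1 j
  have hTA : T (A I j) = fderiv ℝ (fun z => G j z 0) (I, θ) := by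
    rw [hGd]
    refine ContinuousLinearMap.ext fun z => ?_
    simp only [T, LinearMap.coe_mk, AddHom.coe_mk, sum_apply, smul_apply,
      ContinuousLinearMap.comp_apply, ContinuousLinearMap.coe_fst']
    conv_rhs => rw [pi_eq_sum_univ' z.1]
    rw [map_sum]
    refine Finset.sum_congr rfl fun k _ => ?_
    rw [map_smul, smul_eq_mul, smul_eq_mul, mul_comm]
    rfl
  refine Eq.trans hTA ?_
  refine Fin.cases ?_ (fun j => ?_) j
  · rfl
  · rfl
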